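/- Let T be a tree on n ≥ 3 vertices. Then T is saturated (for a degree monotone path) if and only if T is isomorphic to the star K_{1,n-1}. -/

import Mathlib

/-!
A star has `mp = 2`, since every path on three vertices goes leaf, centre, leaf; joining two leaves
creates the monotone path leaf, leaf, centre (`saturated_of_isStarAt`).

For a tree that is not a star, let `v` be a vertex of maximum degree and `u` a leaf not adjacent to
`v`, for instance a vertex at maximum distance from `v` (`exists_far_leaf`). Adding `uv` does not
increase `mp` (`exchange`). In the new graph `v` is the only vertex of maximum degree, so it can only
be the last vertex of an ascending path, and an ascending path avoiding `u` is already ascending in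
the tree; so is one that leaves `u` along a tree edge, as it must then start at `u`. Any other
ascending path has the form `A, u` or `A, u, v`, where `u` and all vertices of `A` have degree at
most two. The tree path from `u` backwards along `A` does
not contain `v`, hence by connectedness it can be prolonged by a vertex of degree at least two
(`extend_path`); the prolonged path is ascending in the tree and has at least as many vertices.
-/

open SimpleGraph

variable {V : Type*}

/-- The degree of a vertex `v`: the number of neighbours of `v`. -/
noncomputable def gdeg (G : SimpleGraph V) (v : V) : ℕ := (G.neighborSet v).ncard

/-- A walk is degree monotone if the sequence of degrees of the vertices in the
order in which they appear on the walk is monotone (non-decreasing or non-increasing). -/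
def IsDegMonotone (G : SimpleGraph V) {u v : V} (p : G.Walk u v) : Prop :=
  (p.support.map (gdeg G)).Chain' (· ≤ ·) ∨ (p.support.map (gdeg G)).Chain' (· ≥ ·)

/-- `mp G` is the maximum number of vertices of a degree monotone path in `G`. -/
noncomputable def mp (G : SimpleGraph V) : ℕ :=
  sSup {n | ∃ (u v : V) (p : G.Walk u v), p.IsPath ∧ IsDegMonotone G p ∧ p.support.length = n}

/-- The graph obtained from `G` by adding the edge `uv`. -/
def addEdge (G : SimpleGraph V) (u v : V) : SimpleGraph V :=
  G ⊔ fromEdgeSet {s(u, v)}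

/-- `G` is saturated if adding any edge between non-adjacent vertices increases `mp`. -/
def Saturated (G : SimpleGraph V) : Prop :=
  ∀ u v : V, u ≠ v → ¬ G.Adj u v → mp G < mp (addEdge G u v)

/-- `G` is `k`-saturated if `mp G < k` and adding any edge between non-adjacent
vertices creates a degree monotone path on at least `k` vertices. -/
def KSaturated (k : ℕ) (G : SimpleGraph V) : Prop :=
  mp G < k ∧ ∀ u v : V, u ≠ v → ¬ G.Adj u v → k ≤ mp (addEdge G u v)

/-- `hSat n k` is the minimum number of edges of a `k`-saturated graph on `n` vertices. -/
noncomputable def hSat (n k : ℕ) : ℕ :=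
  sInf {m | ∃ G : SimpleGraph (Fin n), KSaturated k G ∧ G.edgeSet.ncard = m}

/-! ### Ascending paths as vertex lists -/

section Lists

/-- `Asc G a b`: the step from `a` to `b` is along an edge and does not decrease the degree. -/
def Asc (G : SimpleGraph V) (a b : V) : Prop := G.Adj a b ∧ gdeg G a ≤ gdeg G b

/-- An ascending path, encoded as the list of its vertices. -/
def AscPath (G : SimpleGraph V) (l : List V) : Prop :=
  l ≠ [] ∧ l.IsChain (Asc G) ∧ l.Nodup

lemma isChain_asc_iff (G : SimpleGraph V) (l : List V) :
    l.IsChain (Asc G) ↔ l.IsChain G.Adj ∧ (l.map (gdeg G)).IsChain (· ≤ ·) := by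
  induction l with
  | nil => simp
  | cons a l ih =>
    cases l with
    | nil => simp
    | cons b l =>
      simp only [List.isChain_cons_cons, List.map_cons] at ih ⊢
      rw [ih, Asc]
      tauto

/-- Reversing a non-increasing path makes it ascending, so only ascending paths matter for `mp`. -/
lemma mp_set_eq (G : SimpleGraph V) :
    {n | ∃ (u v : V) (p : G.Walk u v), p.IsPath ∧ IsDegMonotone G p ∧ p.support.length = n}
      = {n | ∃ l, AscPath G l ∧ l.length = n} := by
  ext n
  constructor
  · rintro ⟨u, v, p, hp, hm | hm, rfl⟩
    · exact ⟨p.support, ⟨p.support_ne_nil, (isChain_asc_iff _ _).2 ⟨p.isChain_adj_support, hm⟩,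
        hp.support_nodup⟩, rfl⟩
    · refine ⟨p.reverse.support, ⟨p.reverse.support_ne_nil, (isChain_asc_iff _ _).2
        ⟨p.reverse.isChain_adj_support, ?_⟩, hp.reverse.support_nodup⟩, by simp⟩
      rw [Walk.support_reverse, List.map_reverse, List.isChain_reverse]
      exact hm
  · rintro ⟨l, ⟨h0, hc, hn⟩, rfl⟩
    obtain ⟨h1, h2⟩ := (isChain_asc_iff _ _).1 hc
    refine ⟨_, _, Walk.ofSupport l h0 h1, ?_, Or.inl ?_, ?_⟩
    · rw [Walk.isPath_def, Walk.support_ofSupport]; exact hn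
    · rw [Walk.support_ofSupport]; exact h2
    · rw [Walk.support_ofSupport]

lemma mp_le {G : SimpleGraph V} {k : ℕ} (h : ∀ l, AscPath G l → l.length ≤ k) : mp G ≤ k := by
  rw [mp, mp_set_eq]
  rcases Set.eq_empty_or_nonempty {n | ∃ l, AscPath G l ∧ l.length = n} with h0 | h0
  · rw [h0]; simp
  · refine csSup_le h0 ?_
    rintro _ ⟨l, hl, rfl⟩
    exact h l hl

variable [Fintype V]

lemma AscPath.length_le_mp {G : SimpleGraph V} {l : List V} (h : AscPath G l) :
    l.length ≤ mp G := by
  rw [mp, mp_set_eq]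
  refine le_csSup ⟨Fintype.card V, ?_⟩ ⟨l, h, rfl⟩
  rintro _ ⟨l, h, rfl⟩
  exact h.2.2.length_le_card

end Lists

/-! ### Degrees after adding an edge -/

section Degrees

lemma addEdge_adj {G : SimpleGraph V} {u v a b : V} :
    (addEdge G u v).Adj a b ↔ G.Adj a b ∨ (a ≠ b ∧ (a = u ∧ b = v ∨ a = v ∧ b = u)) := by
  simp only [addEdge, sup_adj, fromEdgeSet_adj, Set.mem_singleton_iff, Sym2.eq_iff]
  tauto

lemma addEdge_comm (G : SimpleGraph V) (u v : V) : addEdge G u v = addEdge G v u := by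
  rw [addEdge, addEdge, Sym2.eq_swap]

lemma gdeg_addEdge_of_ne {G : SimpleGraph V} {u v x : V} (h1 : x ≠ u) (h2 : x ≠ v) :
    gdeg (addEdge G u v) x = gdeg G x := by
  unfold gdeg
  congr 1
  ext y
  simp only [mem_neighborSet, addEdge_adj]
  tauto

variable [Fintype V]

lemma gdeg_addEdge_left {G : SimpleGraph V} {u v : V} (h : u ≠ v) (hn : ¬ G.Adj u v) :
    gdeg (addEdge G u v) u = gdeg G u + 1 := by
  unfold gdeg
  rw [← Set.ncard_insert_of_notMem (a := v) (s := G.neighborSet u) (by simpa using hn)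
    (Set.toFinite _)]
  congr 1
  ext y
  simp only [mem_neighborSet, addEdge_adj, Set.mem_insert_iff]
  grind

lemma gdeg_addEdge_right {G : SimpleGraph V} {u v : V} (h : u ≠ v) (hn : ¬ G.Adj u v) :
    gdeg (addEdge G u v) v = gdeg G v + 1 := by
  rw [addEdge_comm, gdeg_addEdge_left h.symm (fun h' => hn h'.symm)]

lemma gdeg_le_one_iff {G : SimpleGraph V} {x : V} :
    gdeg G x ≤ 1 ↔ ∀ y z, G.Adj x y → G.Adj x z → y = z := by
  unfold gdeg
  rw [Set.ncard_le_one (Set.toFinite _)]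
  simp only [mem_neighborSet]
  constructor
  · intro h y z hy hz; exact h y hy z hz
  · intro h y hy z hz; exact h y z hy hz

lemma one_le_gdeg {G : SimpleGraph V} {x y : V} (h : G.Adj x y) : 1 ≤ gdeg G x :=
  (Set.ncard_pos (Set.toFinite _)).2 ⟨y, h⟩

lemma eq_of_gdeg_le_two {G : SimpleGraph V} {x a b c : V} (h : gdeg G x ≤ 2)
    (ha : G.Adj x a) (hb : G.Adj x b) (hc : G.Adj x c) (hab : a ≠ b) (hac : a ≠ c) : b = c := by
  by_contra hbc
  have : 2 < gdeg G x :=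
    (Set.two_lt_ncard_iff (Set.toFinite _)).2 ⟨a, b, c, ha, hb, hc, hab, hac, hbc⟩
  omega

end Degrees

/-! ### Prolonging a path of vertices of degree at most two -/

section Extension

lemma mem_of_closed {G : SimpleGraph V} (hG : G.Connected) {S : Set V} {s : V} (hs : s ∈ S)
    (h : ∀ x ∈ S, ∀ y, G.Adj x y → y ∈ S) (v : V) : v ∈ S := by
  obtain ⟨p⟩ := hG.preconnected s v
  induction p with
  | nil => exact hs
  | cons hadj p ih => exact ih (h _ hs _ hadj)

variable [Fintype V]

/-- If only the head `s` of `s :: L` can have neighbours off the list, and at most one neighbour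
outside `L`, then a vertex `v` of degree at least two off the list forces `s` to have an outside
neighbour of degree at least two: otherwise the component of `s` would not reach `v`. -/
lemma exists_next {G : SimpleGraph V} (hG : G.Connected) {v s : V} {L : List V}
    (hv : 2 ≤ gdeg G v) (hvL : v ∉ s :: L)
    (h1 : ∀ x ∈ L, ∀ y, G.Adj x y → y ∈ s :: L)
    (h2 : ∀ y z, G.Adj s y → G.Adj s z → y ∉ L → z ∉ L → y = z) :
    ∃ t, t ∉ s :: L ∧ G.Adj s t ∧ 2 ≤ gdeg G t := by
  obtain ⟨t, htL, hst⟩ : ∃ t, t ∉ s :: L ∧ G.Adj s t := by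
    by_contra! hcon
    refine hvL (mem_of_closed hG (S := {x | x ∈ s :: L}) (s := s) (by simp) ?_ v)
    intro x hx y hxy
    rcases List.mem_cons.1 hx with rfl | hx
    · by_contra hy
      exact hcon y hy hxy
    · exact h1 x hx y hxy
  refine ⟨t, htL, hst, ?_⟩
  by_contra! hlt
  have ht := gdeg_le_one_iff.1 (Nat.lt_succ_iff.1 hlt)
  have := mem_of_closed hG (S := {x | x = t ∨ x ∈ s :: L}) (s := s) (by simp) (by
    rintro x (rfl | hx) y hxy
    · right
      rw [ht y s hxy hst.symm]
      simp
    · rcases List.mem_cons.1 hx with rfl | hx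
      · by_cases hy : y ∈ L
        · right; simp [hy]
        · left
          exact h2 y t hxy hst hy (fun h => htL (List.mem_cons_of_mem _ h))
      · right; exact h1 x hx y hxy) v
  rcases this with rfl | h
  · omega
  · exact hvL h

/-- A path `s, …, u` of vertices of degree at most two that ends in a leaf `u` and misses a vertex
`v` of degree at least two can be prolonged at its head by some `t`, so that read from `u` to `t` it
is ascending. The last two conjuncts say that only the head has neighbours off the path, and at
most one; they carry the induction. -/
lemma extend_path {G : SimpleGraph V} (hG : G.Connected) {u v : V} (hu : gdeg G u ≤ 1)
    (hv : 2 ≤ gdeg G v) : ∀ (A : List V) (s : V) (L : List V), A ++ [u] = s :: L →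
    (s :: L).IsChain G.Adj → (s :: L).Nodup → (∀ x ∈ s :: L, gdeg G x ≤ 2) → v ∉ s :: L →
    ∃ t, t ∉ s :: L ∧ (t :: s :: L).IsChain (fun a b => Asc G b a) ∧
      (∀ x ∈ L, ∀ y, G.Adj x y → y ∈ s :: L) ∧
      (∀ y z, G.Adj s y → G.Adj s z → y ∉ L → z ∉ L → y = z) := by
  intro A
  induction A with
  | nil =>
    intro s L h hc hn hd hvL
    obtain ⟨rfl, rfl⟩ : u = s ∧ [] = L := by simpa using h
    have h1 : ∀ x ∈ ([] : List V), ∀ y, G.Adj x y → y ∈ [u] := by simp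
    have h2 : ∀ y z, G.Adj u y → G.Adj u z → y ∉ ([] : List V) → z ∉ ([] : List V) → y = z :=
      fun y z hy hz _ _ => gdeg_le_one_iff.1 hu y z hy hz
    obtain ⟨t, ht, hst, hdt⟩ := exists_next hG hv hvL h1 h2
    exact ⟨t, ht, by simp [Asc, hst]; omega, h1, h2⟩
  | cons a A ih =>
    intro s L h hc hn hd hvL
    obtain ⟨rfl, rfl⟩ : a = s ∧ A ++ [u] = L := by simpa using h
    obtain ⟨s, L, hL⟩ : ∃ s L, A ++ [u] = s :: L := by
      cases A with
      | nil => exact ⟨u, [], rfl⟩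
      | cons b A => exact ⟨b, A ++ [u], rfl⟩
    rw [hL] at hc hn hd hvL ⊢
    rw [List.isChain_cons_cons] at hc
    rw [List.nodup_cons] at hn
    obtain ⟨t, ht, htc, h1, h2⟩ := ih s L hL hc.2 hn.2
      (fun x hx => hd x (List.mem_cons_of_mem _ hx)) (fun h => hvL (List.mem_cons_of_mem _ h))
    rw [List.isChain_cons_cons] at htc
    -- The prolongation found for the shorter path is the vertex already preceding it.
    obtain rfl : t = a := h2 t a htc.1.1 hc.1.symm
      (fun h => ht (List.mem_cons_of_mem _ h)) (fun h => hn.1 (List.mem_cons_of_mem _ h))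
    have h1' : ∀ x ∈ s :: L, ∀ y, G.Adj x y → y ∈ t :: s :: L := by
      intro x hx y hxy
      rcases List.mem_cons.1 hx with rfl | hx
      · by_cases hy : y ∈ L
        · simp [hy]
        · rw [h2 y t hxy htc.1.1 hy (fun h => ht (List.mem_cons_of_mem _ h))]
          simp
      · exact List.mem_cons_of_mem _ (h1 x hx y hxy)
    have h2' : ∀ y z, G.Adj t y → G.Adj t z → y ∉ s :: L → z ∉ s :: L → y = z := by
      intro y z hy hz hyL hzL
      refine eq_of_gdeg_le_two (hd t (by simp)) hc.1 hy hz ?_ ?_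
      · rintro rfl; simp at hyL
      · rintro rfl; simp at hzL
    obtain ⟨r, hr, htr, hdr⟩ := exists_next hG hv hvL h1' h2'
    refine ⟨r, hr, ?_, h1', h2'⟩
    rw [List.isChain_cons_cons, List.isChain_cons_cons]
    exact ⟨⟨htr, (hd t (by simp)).trans hdr⟩, htc⟩

end Extension

/-! ### Joining a leaf to a vertex of maximum degree -/

section NotSaturated

variable [Fintype V]

/-- A vertex at maximum distance from a vertex `v` of a tree is a leaf, because all its neighbours
are reached from `v` by paths avoiding it, and paths in a tree are unique. -/
lemma exists_far_leaf {T : SimpleGraph V} (hT : T.IsTree) {v x : V} (hx : x ≠ v)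
    (hvx : ¬ T.Adj v x) : ∃ u, u ≠ v ∧ ¬ T.Adj u v ∧ gdeg T u ≤ 1 := by
  classical
  have : Nonempty V := ⟨v⟩
  obtain ⟨u, hu⟩ := Finite.exists_max (fun y => T.dist v y)
  have h2 : 1 < T.dist v u := by
    have h0 : T.dist v x ≠ 0 := fun h => hx ((hT.connected.dist_eq_zero_iff).1 h).symm
    have h1 : T.dist v x ≠ 1 := fun h => hvx (dist_eq_one_iff_adj.1 h)
    have := hu x
    omega
  refine ⟨u, ?_, ?_, ?_⟩
  · rintro rfl; simp at h2
  · intro h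
    have := dist_eq_one_iff_adj.2 h.symm
    omega
  · rw [gdeg_le_one_iff]
    have key : ∀ y, T.Adj u y → ∃ p : T.Walk v u, p.IsPath ∧ p.penultimate = y := by
      intro y hy
      obtain ⟨p, hp, hlen⟩ := hT.connected.exists_path_of_dist v y
      have hnot : u ∉ p.support := by
        intro hmem
        have h3 := dist_le (p.takeUntil u hmem)
        have h4 := p.length_takeUntil_lt_length hmem hy.ne
        have := hu y
        omega
      exact ⟨p.concat hy.symm, hp.concat hnot hy.symm, by simp⟩
    intro y z hy hz
    obtain ⟨p, hp, rfl⟩ := key y hy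
    obtain ⟨q, hq, rfl⟩ := key z hz
    rw [Subtype.mk.inj ((hT.isAcyclic.subsingleton_path v u).elim ⟨p, hp⟩ ⟨q, hq⟩)]

/-- Joining a leaf `u` to a non-adjacent vertex `v` of maximum degree does not create ascending paths
longer than those already present. -/
lemma exchange {T : SimpleGraph V} (hT : T.Connected) {u v : V} (huv : u ≠ v)
    (hadj : ¬ T.Adj u v) (hu : gdeg T u ≤ 1) (hv : 2 ≤ gdeg T v)
    (hmax : ∀ x, gdeg T x ≤ gdeg T v) {l : List V} (hl : AscPath (addEdge T u v) l) :
    ∃ l', AscPath T l' ∧ l.length ≤ l'.length := by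
  classical
  have du := gdeg_addEdge_left huv hadj
  have dv := gdeg_addEdge_right huv hadj
  have dx : ∀ x, x ≠ u → x ≠ v → gdeg (addEdge T u v) x = gdeg T x :=
    fun x => gdeg_addEdge_of_ne
  obtain ⟨h0, hc, hn⟩ := hl
  -- An ascending step cannot leave `v`, the unique vertex of maximum degree in the new graph.
  have vlast : ∀ b, ¬ Asc (addEdge T u v) v b := by
    rintro b ⟨h1, h2⟩
    have hb : b ≠ v := h1.ne'
    by_cases hbu : b = u
    · subst hbu; omega
    · have := dx b hbu hb
      have := hmax b
      omega
  have step : ∀ a b, a ≠ u → b ≠ u → Asc (addEdge T u v) a b → Asc T a b := by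
    intro a b ha hb hab
    have hav : a ≠ v := by rintro rfl; exact vlast b hab
    refine ⟨?_, ?_⟩
    · rcases addEdge_adj.1 hab.1 with h | h
      · exact h
      · tauto
    · by_cases hbv : b = v
      · subst hbv; exact hmax a
      · have := hab.2
        rwa [dx a ha hav, dx b hb hbv] at this
  have chain_of_notMem : ∀ B : List V, u ∉ B → B.IsChain (Asc (addEdge T u v)) →
      B.IsChain (Asc T) := by
    intro B hB hBc
    refine hBc.imp_of_mem_imp ?_
    intro a b ha hb hab
    exact step a b (by rintro rfl; exact hB ha) (by rintro rfl; exact hB hb) hab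
  by_cases hmem : u ∈ l
  swap
  · exact ⟨l, ⟨h0, chain_of_notMem l hmem hc, hn⟩, le_rfl⟩
  obtain ⟨A, B, rfl⟩ := List.append_of_mem hmem
  have hAc := hc.left_of_append
  have hBc := hc.right_of_append
  rw [List.nodup_append] at hn
  obtain ⟨hnA, hnB, hdisj⟩ := hn
  have huA : u ∉ A := fun h => hdisj u h u (by simp) rfl
  have huB : u ∉ B := (List.nodup_cons.1 hnB).1
  have hlast : ∀ A' a, A = A' ++ [a] → Asc (addEdge T u v) a u := by
    rintro A' a rfl
    rw [List.append_assoc] at hc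
    exact (List.isChain_cons_cons.1 hc.right_of_append).1
  by_cases hB : ∃ b B', B = b :: B' ∧ b ≠ v
  · -- A tree edge `ub` leaves `u`, so `u` comes first: a predecessor would also be `b`.
    obtain ⟨b, B', rfl, hbv⟩ := hB
    have hub' := (List.isChain_cons_cons.1 hBc).1
    have hub : T.Adj u b := by
      rcases addEdge_adj.1 hub'.1 with h | h
      · exact h
      · tauto
    have hA : A = [] := by
      rcases List.eq_nil_or_concat' A with h | ⟨A', a, h⟩
      · exact h
      · exfalso
        have hau := hlast A' a h
        have hav : a ≠ v := by rintro rfl; exact vlast u hau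
        have hau' : T.Adj a u := by
          rcases addEdge_adj.1 hau.1 with h | h
          · exact h
          · tauto
        have := gdeg_le_one_iff.1 hu a b hau'.symm hub
        exact hdisj a (by simp [h]) b (by simp) this
    subst hA
    refine ⟨u :: b :: B', ⟨by simp, ?_, hnB⟩, by simp⟩
    rw [List.isChain_cons_cons]
    exact ⟨⟨hub, hu.trans (one_le_gdeg hub.symm)⟩,
      chain_of_notMem _ huB (List.isChain_cons_cons.1 hBc).2⟩
  · have hBlen : B.length ≤ 1 := by
      rcases B with _ | ⟨b, _ | ⟨b', B⟩⟩
      · simp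
      · simp
      · exfalso
        obtain rfl : b = v := by
          by_contra hb
          exact hB ⟨b, _, rfl, hb⟩
        simp only [List.isChain_cons_cons] at hBc
        exact vlast _ hBc.2.1
    -- The vertices of `A` precede `u`, whose degree in the new graph is at most two.
    have hd' : ∀ x ∈ A, gdeg (addEdge T u v) x ≤ 2 := by
      have h3 : (A ++ [u]).IsChain (Asc (addEdge T u v)) := by
        have : (A ++ [u]) ++ B = A ++ u :: B := by simp
        rw [← this] at hc
        exact hc.left_of_append
      have h4 := ((isChain_asc_iff _ _).1 h3).2
      rw [List.isChain_iff_pairwise, List.map_append, List.pairwise_append] at h4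
      intro x hx
      have := h4.2.2 _ (List.mem_map_of_mem hx) (gdeg (addEdge T u v) u) (by simp)
      omega
    have hvA : v ∉ A := by
      intro h
      have := hd' v h
      omega
    have hdA : ∀ x ∈ A, gdeg T x ≤ 2 := by
      intro x hx
      rw [← dx x (by rintro rfl; exact huA hx) (by rintro rfl; exact hvA hx)]
      exact hd' x hx
    have hchain : (A ++ [u]).IsChain T.Adj := by
      rw [List.isChain_append]
      refine ⟨((isChain_asc_iff _ _).1 (chain_of_notMem A huA hAc)).1, by simp, ?_⟩
      intro a ha b hb
      obtain rfl : u = b := by simpa using hb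
      have hau := hlast _ a (List.dropLast_append_getLast? a ha).symm
      have hav : a ≠ v := by rintro rfl; exact vlast u hau
      rcases addEdge_adj.1 hau.1 with h | h
      · exact h
      · tauto
    have hnod : (A ++ [u]).Nodup := by
      rw [List.nodup_append]
      refine ⟨hnA, by simp, ?_⟩
      intro a ha b hb
      obtain rfl : b = u := by simpa using hb
      rintro rfl
      exact huA ha
    obtain ⟨s, L, hL⟩ : ∃ s L, A ++ [u] = s :: L := by
      cases A with
      | nil => exact ⟨u, [], rfl⟩
      | cons b A => exact ⟨b, A ++ [u], rfl⟩
    obtain ⟨t, ht, htc, -, -⟩ := extend_path hT hu hv A s L hL (hL ▸ hchain) (hL ▸ hnod)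
      (by
        rw [← hL]
        intro x hx
        rcases List.mem_append.1 hx with h | h
        · exact hdA x h
        · obtain rfl : x = u := by simpa using h
          omega)
      (by
        rw [← hL]
        intro h
        rcases List.mem_append.1 h with h | h
        · exact hvA h
        · exact huv (List.mem_singleton.1 h).symm)
    rw [← hL] at ht htc
    refine ⟨(t :: (A ++ [u])).reverse, ⟨by simp, ?_, ?_⟩, ?_⟩
    · rw [List.isChain_reverse]; exact htc
    · rw [List.nodup_reverse, List.nodup_cons]; exact ⟨ht, hnod⟩
    · simp; omega

end NotSaturated

/-! ### Stars -/

section Star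

/-- `G` is the star with centre `c`: its edges are exactly the pairs containing `c`. -/
def IsStarAt (G : SimpleGraph V) (c : V) : Prop :=
  ∀ a b, G.Adj a b ↔ a ≠ b ∧ (a = c ∨ b = c)

variable [Fintype V]

lemma isStarAt_of_saturated {T : SimpleGraph V} (hT : T.IsTree) (hs : Saturated T) :
    ∃ c, IsStarAt T c := by
  have := hT.connected.nonempty
  obtain ⟨v, hv⟩ := Finite.exists_max (gdeg T)
  refine ⟨v, ?_⟩
  have hall : ∀ x, x ≠ v → T.Adj v x := by
    intro x hx
    by_contra hvx
    obtain ⟨u, huv, hadj, hu⟩ := exists_far_leaf hT hx hvx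
    have h2 : 2 ≤ gdeg T v := by
      by_contra! hlt
      have hd : ∀ x, gdeg T x ≤ 1 := fun x => (hv x).trans (by omega)
      -- If all degrees are at most one, then `v` and its neighbours are closed under adjacency.
      have := mem_of_closed hT.connected (S := {y | y = v ∨ T.Adj v y}) (s := v) (by simp) (by
        rintro y (rfl | hy) z hz
        · exact Or.inr hz
        · exact Or.inl (gdeg_le_one_iff.1 (hd y) z v hz hy.symm)) x
      exact this.elim hx hvx
    refine absurd (hs u v huv hadj) (not_lt.2 (mp_le ?_))
    intro l hl
    obtain ⟨l', hl', hlen⟩ := exchange hT.connected huv hadj hu h2 hv hl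
    exact hlen.trans hl'.length_le_mp
  intro a b
  constructor
  · intro hab
    refine ⟨hab.ne, ?_⟩
    by_contra! hcon
    -- An edge avoiding `v` would close a triangle with `v`.
    have hp : (Walk.cons (hall a hcon.1) (Walk.cons hab Walk.nil)).IsPath := by
      simp [Walk.cons_isPath_iff, hab.ne, hcon.1.symm, hcon.2.symm]
    have hq : (Walk.cons (hall b hcon.2) Walk.nil).IsPath := by
      simp [Walk.cons_isPath_iff, hcon.2.symm]
    have := congrArg (fun p => p.1.length) ((hT.isAcyclic.subsingleton_path v b).elim
      (⟨_, hp⟩ : T.Path v b) ⟨_, hq⟩)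
    simp at this
  · rintro ⟨hab, rfl | rfl⟩
    · exact hall b hab.symm
    · exact (hall a hab).symm

lemma saturated_of_isStarAt {T : SimpleGraph V} {c : V} (hc : IsStarAt T c) : Saturated T := by
  intro u v huv hadj
  have huc : u ≠ c := fun h => hadj ((hc u v).2 ⟨huv, Or.inl h⟩)
  have hvc : v ≠ c := fun h => hadj ((hc u v).2 ⟨huv, Or.inr h⟩)
  have hleaf : ∀ x, x ≠ c → gdeg T x ≤ 1 := by
    intro x hx
    rw [gdeg_le_one_iff]
    intro y z hy hz
    rw [((hc x y).1 hy).2.resolve_left hx, ((hc x z).1 hz).2.resolve_left hx]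
  have hu : T.Adj u c := (hc u c).2 ⟨huc, Or.inr rfl⟩
  have hv : T.Adj v c := (hc v c).2 ⟨hvc, Or.inr rfl⟩
  have hdc : 2 ≤ gdeg T c := by
    by_contra! hlt
    exact huv (gdeg_le_one_iff.1 (Nat.lt_succ_iff.1 hlt) u v hu.symm hv.symm)
  have h1 : mp T ≤ 2 := by
    refine mp_le ?_
    rintro l ⟨-, hl, hn⟩
    rcases l with _ | ⟨a, _ | ⟨b, _ | ⟨d, l⟩⟩⟩
    · simp
    · simp
    · simp
    · exfalso
      simp only [List.isChain_cons_cons] at hl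
      obtain ⟨hab, hbd, -⟩ := hl
      have had : a ≠ d := by rintro rfl; simp at hn
      by_cases hb : b = c
      · have hd := hleaf d (hb ▸ hbd.1.ne')
        have h3 := hbd.2
        rw [hb] at h3
        omega
      · exact had ((((hc a b).1 hab.1).2.resolve_right hb).trans
          (((hc b d).1 hbd.1).2.resolve_left hb).symm)
  have h2 : AscPath (addEdge T u v) [u, v, c] := by
    refine ⟨by simp, ?_, by simp [huv, huc, hvc]⟩
    have := hleaf u huc
    have := hleaf v hvc
    have := one_le_gdeg hu
    have := one_le_gdeg hv
    have := gdeg_addEdge_left huv hadj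
    have := gdeg_addEdge_right huv hadj
    have := gdeg_addEdge_of_ne (G := T) huc.symm hvc.symm
    simp only [List.isChain_cons_cons, List.IsChain.singleton, and_true, Asc, addEdge_adj]
    refine ⟨⟨Or.inr ⟨huv, by simp⟩, by omega⟩, ⟨Or.inl hv, by omega⟩⟩
  have := h2.length_le_mp
  simp at this
  omega

lemma isStarAt_iff_iso {T : SimpleGraph V} {n : ℕ} (hn : 3 ≤ n) (hcard : Fintype.card V = n) :
    (∃ c, IsStarAt T c) ↔ Nonempty (T ≃g completeBipartiteGraph Unit (Fin (n - 1))) := by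
  classical
  constructor
  · rintro ⟨c, hc⟩
    obtain ⟨e⟩ : Nonempty (V ≃ Unit ⊕ Fin (n - 1)) := by
      refine ⟨Fintype.equivOfCardEq ?_⟩
      simp; omega
    -- Compose an arbitrary bijection with a transposition taking `c` to the centre.
    let f := e.trans (Equiv.swap (e c) (Sum.inl ()))
    have hf : ∀ x, f x = Sum.inl () ↔ x = c := by
      intro x
      have hfc : f c = Sum.inl () := by simp [f]
      rw [← hfc]
      exact f.injective.eq_iff
    have hL : ∀ x, (f x).isLeft = true ↔ x = c := by
      intro x
      rw [← hf]
      rcases f x with ⟨⟩ | i <;> simp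
    have hR : ∀ x, (f x).isRight = true ↔ x ≠ c := by
      intro x
      rw [Ne, ← hf]
      rcases f x with ⟨⟩ | i <;> simp
    refine ⟨⟨f, ?_⟩⟩
    intro a b
    rw [completeBipartiteGraph_adj, hL, hL, hR, hR, hc]
    grind
  · rintro ⟨e⟩
    refine ⟨e.symm (Sum.inl ()), ?_⟩
    intro a b
    rw [← e.map_adj_iff, completeBipartiteGraph_adj, ← e.injective.ne_iff,
      ← e.injective.eq_iff (a := a), ← e.injective.eq_iff (a := b)]
    simp only [RelIso.apply_symm_apply]
    rcases e a with ⟨⟩ | i <;> rcases e b with ⟨⟩ | j <;> simp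

end Star

theorem stmt_3 [Fintype V] (n : ℕ) (hn : 3 ≤ n) (hcard : Fintype.card V = n)
    (T : SimpleGraph V) (hT : T.IsTree) :
    Saturated T ↔ Nonempty (T ≃g completeBipartiteGraph Unit (Fin (n - 1))) := by
  rw [← isStarAt_iff_iso hn hcard]
  exact ⟨isStarAt_of_saturated hT, fun ⟨_, hc⟩ => saturated_of_isStarAt hc⟩
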